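/- arXiv:2212.07012 — 2 statements merged into one kernel-verified Lean document; each statement's English description precedes it below -/
import Mathlib

section
/- Argument-principle mapping theorem for Jordan regions (bounded case): let U, V ⊆ ℂ be compact sets each homeomorphic to the closed unit disk, and let f : ℂ → ℂ be continuous on U and complex analytic on the interior of U. Suppose the restriction of f to the frontier of U is a homeomorphism from the frontier of U onto the frontier of V. Then f restricted to U is a homeomorphism from U onto V; in particular, f is injective on U, f(U) = V, and f maps the interior of U biholomorphically onto the interior of V. -/
/-!
Winding numbers are replaced by classes of nonvanishing functions modulo exponentials of continuous
functions. On the frontier of a Jordan region `U`, a function `F` which is nonvanishing there,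
holomorphic inside and has `n` zeros is equivalent to `(z - c) ^ n` for any interior point `c`,
because moving a zero along a path avoiding the frontier does not change the class and a
nonvanishing function on `U` has a logarithm. On the other hand, `z - c` is equivalent to an `n`-th
power only for `n = 1`.

Apply this to `F = f - w`. For `w` in the interior of `V`, transporting the equivalence by the
inverse of `f` on the frontier shows that `z - w` is equivalent to an `n`-th power on the frontier
of `V`, so that `f` takes the value `w` exactly once, with nonzero derivative. For `w ∉ V`, the
function `f - w` has a logarithm on the frontier of `U`, so `z - c` is equivalent to its own power
`(z - c) ^ (n + 1)` and `f` omits `w`.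
-/

open Set Metric Filter Topology

namespace JordanRegion

universe u v

lemma continuousOn_normalize {E : Type*} [NormedAddCommGroup E] [NormedSpace ℝ E] :
    ContinuousOn (NormedSpace.normalize : E → E) {0}ᶜ := by
  unfold NormedSpace.normalize
  exact (continuousOn_id.norm.inv₀ fun x hx => norm_ne_zero_iff.2 hx).smul continuousOn_id

/-! ### Logarithmic equivalence of functions -/

section LogEquivOn

variable {X Y : Type*} [TopologicalSpace X] [TopologicalSpace Y] {A B : Set X} {f g h : X → ℂ}

/-- `f` and `g` agree on `A` up to the exponential of a continuous function. For nonvanishing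
functions this is homotopy of maps `A → ℂ \ {0}`, and it takes the place of equality of winding
numbers; `LogEquivOn A f 1` says that `f` has a continuous logarithm on `A`. -/
def LogEquivOn (A : Set X) (f g : X → ℂ) : Prop :=
  ∃ L : X → ℂ, ContinuousOn L A ∧ ∀ x ∈ A, f x = g x * Complex.exp (L x)

namespace LogEquivOn

lemma of_eqOn (h : EqOn f g A) : LogEquivOn A f g :=
  ⟨0, continuousOn_const, fun x hx => by simp [h hx]⟩

lemma symm (h : LogEquivOn A f g) : LogEquivOn A g f :=
  let ⟨L, hL, hfg⟩ := h
  ⟨-L, hL.neg, fun x hx => by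
    rw [hfg x hx, mul_assoc, ← Complex.exp_add, Pi.neg_apply, add_neg_cancel, Complex.exp_zero,
      mul_one]⟩

lemma trans (hfg : LogEquivOn A f g) (hgh : LogEquivOn A g h) : LogEquivOn A f h :=
  let ⟨L, hL, hfg⟩ := hfg
  let ⟨M, hM, hgh⟩ := hgh
  ⟨M + L, hM.add hL, fun x hx => by
    rw [hfg x hx, hgh x hx, mul_assoc, ← Complex.exp_add, Pi.add_apply]⟩

lemma mul {f₁ f₂ g₁ g₂ : X → ℂ} (h₁ : LogEquivOn A f₁ g₁) (h₂ : LogEquivOn A f₂ g₂) :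
    LogEquivOn A (f₁ * f₂) (g₁ * g₂) :=
  let ⟨L, hL, h₁⟩ := h₁
  let ⟨M, hM, h₂⟩ := h₂
  ⟨L + M, hL.add hM, fun x hx => by
    simp only [Pi.mul_apply, Pi.add_apply, h₁ x hx, h₂ x hx, Complex.exp_add]
    ring⟩

lemma mono (h : LogEquivOn A f g) (hBA : B ⊆ A) : LogEquivOn B f g :=
  let ⟨L, hL, hfg⟩ := h
  ⟨L, hL.mono hBA, fun x hx => hfg x (hBA hx)⟩

lemma comp (h : LogEquivOn A f g) {C : Set Y} {u : Y → X} (hu : ContinuousOn u C)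
    (hCA : MapsTo u C A) : LogEquivOn C (f ∘ u) (g ∘ u) :=
  let ⟨L, hL, hfg⟩ := h
  ⟨L ∘ u, hL.comp hu hCA, fun _ hx => hfg _ (hCA hx)⟩

lemma of_homotopy {H : unitInterval → X → ℂ}
    (hH : ContinuousOn (fun p : unitInterval × X => H p.1 p.2) (univ ×ˢ A))
    (hH0 : ∀ t, ∀ x ∈ A, H t x ≠ 0) : LogEquivOn A (H 1) (H 0) := by
  classical
  have hcont : Continuous fun p : unitInterval × A => H p.1 p.2 :=
    hH.comp_continuous (f := fun p : unitInterval × A => (p.1, (p.2 : X))) (by fun_prop)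
      fun p => ⟨mem_univ _, p.2.2⟩
  have hcont0 : Continuous fun p : unitInterval × A => H 0 p.2 :=
    hcont.comp (f := fun p : unitInterval × A => ((0 : unitInterval), p.2)) (by fun_prop)
  let K : C(unitInterval × A, {z : ℂ // z ≠ 0}) :=
    ⟨fun p => ⟨H p.1 p.2 / H 0 p.2, div_ne_zero (hH0 _ _ p.2.2) (hH0 _ _ p.2.2)⟩,
      (hcont.div hcont0 fun p => hH0 _ _ p.2.2).subtype_mk _⟩
  have hK0 : ∀ x : A, K (0, x) = ⟨Complex.exp (ContinuousMap.const A (0 : ℂ) x),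
      Complex.exp_ne_zero _⟩ := fun x =>
    Subtype.ext <| by simp [K, div_self (hH0 0 x x.2)]
  let F := Complex.isCoveringMap_exp.liftHomotopy K (ContinuousMap.const A 0) hK0
  have hF : ∀ x : A, Complex.exp (F (1, x)) = H 1 x / H 0 x := fun x =>
    congrArg Subtype.val <| congrFun
      (Complex.isCoveringMap_exp.liftHomotopy_lifts K (ContinuousMap.const A 0) hK0) (1, x)
  refine ⟨fun x => if hx : x ∈ A then F (1, ⟨x, hx⟩) else 0, ?_, fun x hx => ?_⟩
  · rw [continuousOn_iff_continuous_domRestrict]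
    have hF1 : Continuous fun x : A => F (1, x) := by fun_prop
    convert hF1 using 1
    ext x
    simp
  · simp only [dif_pos hx, hF ⟨x, hx⟩, mul_div_cancel₀ _ (hH0 0 x hx)]

lemma comp_of_segment_subset {E : Type*} [AddCommGroup E] [Module ℝ E] [TopologicalSpace E]
    [ContinuousAdd E] [ContinuousSMul ℝ E] {C : Set E} {g : E → ℂ} (hg : ContinuousOn g C)
    (hg0 : ∀ x ∈ C, g x ≠ 0) {u v : X → E} (hu : ContinuousOn u A) (hv : ContinuousOn v A)
    (huv : ∀ x ∈ A, segment ℝ (u x) (v x) ⊆ C) : LogEquivOn A (g ∘ u) (g ∘ v) := by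
  let w : unitInterval → X → E := fun t x => (1 - t : ℝ) • v x + (t : ℝ) • u x
  have hw : ∀ t, ∀ x ∈ A, w t x ∈ C := fun t x hx => huv x hx <| segment_symm ℝ (u x) (v x) ▸
    ⟨_, _, unitInterval.one_minus_nonneg t, unitInterval.nonneg t, sub_add_cancel _ _, rfl⟩
  have hwc : ContinuousOn (fun p : unitInterval × X => w p.1 p.2) (univ ×ˢ A) := by
    have : ContinuousOn (fun p : unitInterval × X => u p.2) (univ ×ˢ A) :=
      hu.comp continuousOn_snd fun _ hp => hp.2
    have : ContinuousOn (fun p : unitInterval × X => v p.2) (univ ×ˢ A) :=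
      hv.comp continuousOn_snd fun _ hp => hp.2
    fun_prop
  simpa [w, Function.comp_def] using
    of_homotopy (H := fun t => g ∘ w t) (hg.comp hwc fun p hp => hw _ _ hp.2)
      fun t x hx => hg0 _ (hw t x hx)

lemma of_starConvex {E : Type*} [AddCommGroup E] [Module ℝ E] [TopologicalSpace E]
    [ContinuousAdd E] [ContinuousSMul ℝ E] {C : Set E} {a : E} (ha : a ∈ C)
    (hC : StarConvex ℝ a C) {g : E → ℂ} (hg : ContinuousOn g C) (hg0 : ∀ x ∈ C, g x ≠ 0) :
    LogEquivOn C g 1 := by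
  have hconst : LogEquivOn C (fun _ => g a) 1 :=
    ⟨fun _ => Complex.log (g a), continuousOn_const, fun _ _ => by
      simp [Complex.exp_log (hg0 a ha)]⟩
  refine .trans ?_ hconst
  exact comp_of_segment_subset hg hg0 continuousOn_id continuousOn_const fun x hx =>
    segment_symm ℝ a x ▸ hC.segment_subset hx

lemma sub_of_joinedIn {A : Set ℂ} {a b : ℂ} (hab : JoinedIn Aᶜ a b) :
    LogEquivOn A (fun z => z - b) (fun z => z - a) := by
  obtain ⟨γ, hγ⟩ := hab
  simpa using of_homotopy (A := A) (H := fun t z => z - γ t) (by fun_prop)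
    fun t z hz h => hγ t (sub_eq_zero.1 h ▸ hz)

lemma comp_normalize {E : Type*} [NormedAddCommGroup E] [NormedSpace ℝ E] {g : E → ℂ}
    (hg : ContinuousOn g (closedBall 0 1 \ {0})) (hg0 : ∀ x ∈ closedBall 0 1 \ {0}, g x ≠ 0) :
    LogEquivOn (closedBall 0 1 \ {0}) g (g ∘ NormedSpace.normalize) := by
  refine comp_of_segment_subset hg hg0 continuousOn_id
    (continuousOn_normalize.mono fun x hx => hx.2) fun x hx => subset_sdiff_singleton ?_ ?_
  · refine (convex_closedBall 0 1).segment_subset hx.1 ?_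
    simp [NormedSpace.norm_normalize_eq_one_iff.2 hx.2]
  · rintro ⟨s, t, hs, ht, hst, h⟩
    have hx0 : 0 < ‖x‖ := norm_pos_iff.2 hx.2
    have hpos : 0 < s + t * ‖x‖⁻¹ := by
      rcases hs.eq_or_lt with rfl | hs
      · rw [zero_add] at hst
        rw [hst]
        positivity
      · positivity
    change s • x + t • (‖x‖⁻¹ • x) = 0 at h
    rw [smul_smul, ← add_smul, smul_eq_zero_iff_left hx.2] at h
    exact hpos.ne' h

end LogEquivOn
end LogEquivOn

lemma eq_one_of_sub_logEquivOn_pow_sphere {a : ℂ} {R : ℝ} (hR : 0 < R) {n : ℕ} {r : ℂ → ℂ}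
    (hr : ContinuousOn r (sphere a R)) (hr0 : ∀ z ∈ sphere a R, r z ≠ 0)
    (h : LogEquivOn (sphere a R) (fun z => z - a) (r ^ n)) : n = 1 := by
  have hmem : ∀ t, circleMap a R t ∈ sphere a R := circleMap_mem_sphere a hR.le
  obtain ⟨l, hl, hrl⟩ := LogEquivOn.of_starConvex (mem_univ (0 : ℝ)) (starConvex_univ 0)
    (hr.comp (continuous_circleMap a R).continuousOn fun t _ => hmem t) fun t _ => hr0 _ (hmem t)
  obtain ⟨L, hL, hrL⟩ := h
  let q : ℝ → ℂ := fun t => n * l t + L (circleMap a R t) - t * Complex.I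
  have hq : Continuous q := by
    have hLc : Continuous fun t => L (circleMap a R t) :=
      hL.comp_continuous (continuous_circleMap a R) hmem
    have hlc : Continuous l := continuousOn_univ.1 hl
    exact ((continuous_const.mul hlc).add hLc).sub (by fun_prop)
  have hexp : ∀ t, Complex.exp (q t) = R := fun t => by
    have h1 : circleMap a R t - a = r (circleMap a R t) ^ n * Complex.exp (L (circleMap a R t)) :=
      hrL _ (hmem t)
    have h2 : r (circleMap a R t) = Complex.exp (l t) := by simpa using hrl t (mem_univ t)
    rw [h2, ← Complex.exp_nat_mul, ← Complex.exp_add, circleMap_sub_center, circleMap_zero] at h1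
    rw [Complex.exp_sub, ← h1, mul_div_cancel_right₀ _ (Complex.exp_ne_zero _)]
  have hconst : q (2 * Real.pi) = q 0 := by
    refine Complex.isCoveringMap_exp.const_of_comp hq (fun s t => ?_) _ _
    exact Subtype.ext ((hexp s).trans (hexp t).symm)
  have hperiod : circleMap a R (2 * Real.pi) = circleMap a R 0 := by
    simpa using periodic_circleMap a R 0
  obtain ⟨k, hk⟩ : ∃ k : ℤ, l (2 * Real.pi) = l 0 + k * (2 * Real.pi * Complex.I) := by
    refine Complex.exp_eq_exp_iff_exists_int.1 ?_
    simpa [hperiod] using (hrl (2 * Real.pi) (mem_univ _)).symm.trans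
      ((congrArg r hperiod).trans (hrl 0 (mem_univ _)))
  have hnk : (n : ℂ) * k = 1 := by
    refine mul_right_cancel₀ Complex.two_pi_I_ne_zero ?_
    simp only [q, hperiod, hk] at hconst
    push_cast at hconst
    linear_combination hconst
  exact Nat.isUnit_iff.1 <| Int.ofNat_isUnit.1 <| .of_mul_eq_one k <| by exact_mod_cast hnk

/-! ### Extending nonvanishing functions -/

lemma exists_continuous_eqOn {X : Type u} {Y : Type v} [TopologicalSpace X]
    [NormalSpace X] [TopologicalSpace Y] [TietzeExtension.{u, v} Y] {A : Set X}
    (hA : IsClosed A) {g : X → Y} (hg : ContinuousOn g A) :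
    ∃ G : X → Y, Continuous G ∧ EqOn G g A := by
  obtain ⟨G, hG⟩ := ContinuousMap.exists_restrict_eq hA
    ⟨A.domRestrict g, continuousOn_iff_continuous_domRestrict.1 hg⟩
  exact ⟨G, G.continuous, fun x hx => congrArg (fun F : C(A, Y) => F ⟨x, hx⟩) hG⟩

lemma LogEquivOn.of_forall_connectedComponentIn {X : Type*} [TopologicalSpace X]
    [LocallyConnectedSpace X] {O : Set X} (hO : IsOpen O) {f g : X → ℂ}
    (h : ∀ x ∈ O, LogEquivOn (connectedComponentIn O x) f g) : LogEquivOn O f g := by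
  have hC : ∀ C ∈ connectedComponentIn O '' O, LogEquivOn C f g := forall_mem_image.2 h
  choose! L hL hfg using hC
  refine ⟨fun x => L (connectedComponentIn O x) x, fun x hx => ?_, fun x hx =>
    hfg _ (mem_image_of_mem _ hx) x (mem_connectedComponentIn hx)⟩
  have hnhds : connectedComponentIn O x ∈ 𝓝 x :=
    hO.connectedComponentIn.mem_nhds (mem_connectedComponentIn hx)
  refine (((hL _ (mem_image_of_mem _ hx)).continuousAt hnhds).congr ?_).continuousWithinAt
  filter_upwards [hnhds] with y hy
  rw [connectedComponentIn_eq hy]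

lemma logEquivOn_one_of_isClosed_real {A : Set ℝ} (hA : IsClosed A) {g : ℝ → ℂ}
    (hg : ContinuousOn g A) (hg0 : ∀ x ∈ A, g x ≠ 0) : LogEquivOn A g 1 := by
  obtain ⟨G, hG, hGg⟩ := exists_continuous_eqOn hA hg
  have hGlog : LogEquivOn {x | G x ≠ 0} G 1 :=
    .of_forall_connectedComponentIn (isOpen_ne_fun hG continuous_const) fun x hx =>
      .of_starConvex (mem_connectedComponentIn hx)
        (isPreconnected_connectedComponentIn.ordConnected.convex.starConvex
          (mem_connectedComponentIn hx)) hG.continuousOn (connectedComponentIn_subset _ x)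
  exact (LogEquivOn.of_eqOn hGg.symm).trans <| hGlog.mono fun x hx => by
    simpa [hGg hx] using hg0 x hx

lemma logEquivOn_one_of_ssubset_sphere {a : ℂ} {R : ℝ} (hR : 0 < R) {A : Set ℂ} (hA : IsClosed A)
    (hAS : A ⊂ sphere a R) {g : ℂ → ℂ} (hg : ContinuousOn g A) (hg0 : ∀ z ∈ A, g z ≠ 0) :
    LogEquivOn A g 1 := by
  obtain ⟨hAS, p, hp, hpA⟩ := ssubset_iff_exists.1 hAS
  have hpa : p - a ≠ 0 := sub_ne_zero.2 <| ne_of_mem_sphere hp hR.ne'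
  let u : ℂ → ℂ := fun z => (a - z) / (p - a)
  let e : ℝ → ℂ := fun x => a - (p - a) * Complex.exp (x * Complex.I)
  have he : Continuous e := by fun_prop
  have hexp : ∀ z ∈ A, Complex.exp ((u z).arg * Complex.I) = u z := fun z hz => by
    have hnorm : ‖u z‖ = 1 := by
      rw [norm_div, norm_sub_rev, mem_sphere_iff_norm.1 (hAS hz), mem_sphere_iff_norm.1 hp,
        div_self hR.ne']
    simpa [hnorm] using Complex.norm_mul_exp_arg_mul_I (u z)
  have heu : ∀ z ∈ A, e (u z).arg = z := fun z hz => by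
    simp only [e, hexp z hz, u, mul_div_cancel₀ _ hpa, sub_sub_cancel]
  have hslit : ∀ z ∈ A, u z ∈ Complex.slitPlane := fun z hz => by
    refine Complex.mem_slitPlane_iff_arg.2 ⟨fun hπ => hpA ?_, hexp z hz ▸ Complex.exp_ne_zero _⟩
    have hz' := heu z hz
    simp only [hπ, e, Complex.exp_pi_mul_I, mul_neg, mul_one, sub_neg_eq_add,
      add_sub_cancel] at hz'
    exact hz' ▸ hz
  have hu : ContinuousOn (fun z => (u z).arg) A := fun z hz =>
    (Complex.continuousAt_arg (hslit z hz)).comp_continuousWithinAt (by fun_prop)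
  have hlog : LogEquivOn (e ⁻¹' A) (g ∘ e) 1 := logEquivOn_one_of_isClosed_real (hA.preimage he)
    (hg.comp he.continuousOn (mapsTo_preimage e A)) fun x hx => hg0 _ hx
  refine .trans (.of_eqOn fun z hz => ?_) <| hlog.comp hu fun z hz => ?_
  · simp only [Function.comp_apply, heu z hz]
  · rwa [mem_preimage, heu z hz]

lemma exists_nonvanishing_eqOn_sphere {a : ℂ} {R : ℝ} (hR : 0 < R) {A : Set ℂ}
    (hA : IsClosed A) (hAS : A ⊆ sphere a R) {g : ℂ → ℂ} (hg : ContinuousOn g A)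
    (hg0 : ∀ z ∈ A, g z ≠ 0) :
    ∃ G : ℂ → ℂ, ContinuousOn G (sphere a R) ∧ (∀ z ∈ sphere a R, G z ≠ 0) ∧ EqOn G g A := by
  obtain rfl | hAS := hAS.eq_or_ssubset
  · exact ⟨g, hg, hg0, eqOn_refl g _⟩
  obtain ⟨L, hL, hgL⟩ := logEquivOn_one_of_ssubset_sphere hR hA hAS hg hg0
  obtain ⟨M, hM, hML⟩ := exists_continuous_eqOn hA hL
  exact ⟨fun z => Complex.exp (M z), by fun_prop, fun z _ => Complex.exp_ne_zero _, fun z hz => by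
    simp [hML hz, hgL z hz]⟩

/-- The part of `K` inside the disk is pushed radially from `p` onto the circle. -/
lemma exists_nonvanishing_eqOn_diff_ball {K : Set ℂ} (hK : IsClosed K) {p : ℂ} (hp : p ∉ K)
    {R : ℝ} (hR : 0 < R) {g : ℂ → ℂ} (hg : ContinuousOn g K) (hg0 : ∀ z ∈ K \ ball p R, g z ≠ 0) :
    ∃ g' : ℂ → ℂ, ContinuousOn g' K ∧ (∀ z ∈ K, g' z ≠ 0) ∧ EqOn g' g (K \ ball p R) := by
  classical
  obtain ⟨G, hG, hG0, hGg⟩ := exists_nonvanishing_eqOn_sphere hR (hK.inter isClosed_sphere)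
    inter_subset_right (hg.mono inter_subset_left) (g := g) (a := p) (R := R) fun z hz =>
      hg0 z ⟨hz.1, fun h => (mem_ball.1 h).ne hz.2⟩
  let ρ : ℂ → ℂ := fun z => p + R • NormedSpace.normalize (z - p)
  have hρ : ContinuousOn ρ K := by
    have := continuousOn_normalize (E := ℂ) |>.comp (s := K) (f := fun z => z - p) (by fun_prop)
      fun z hz h => hp (sub_eq_zero.1 h ▸ hz)
    exact continuousOn_const.add (this.const_smul R)
  have hρS : MapsTo ρ K (sphere p R) := fun z hz => by
    have : z - p ≠ 0 := fun h => hp (sub_eq_zero.1 h ▸ hz)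
    simp [ρ, NormedSpace.norm_normalize_eq_one_iff.2 this, hR.le]
  have hρid : EqOn ρ id (sphere p R) := fun z hz => by
    have hz' := NormedSpace.norm_smul_normalize (z - p)
    rw [mem_sphere_iff_norm.1 hz] at hz'
    simp only [ρ, hz', add_sub_cancel, id]
  refine ⟨(ball p R).piecewise (G ∘ ρ) g, ContinuousOn.piecewise ?_ ?_ ?_, fun z hz => ?_, ?_⟩
  · rintro z ⟨hzK, hz⟩
    rw [frontier_ball p hR.ne'] at hz
    rw [Function.comp_apply, hρid hz, id, hGg ⟨hzK, hz⟩]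
  · exact (hG.comp hρ hρS).mono inter_subset_left
  · exact hg.mono inter_subset_left
  · by_cases hzp : z ∈ ball p R
    · simpa [hzp] using hG0 _ (hρS hz)
    · simpa [hzp] using hg0 z ⟨hz, hzp⟩
  · exact (piecewise_eqOn_compl _ _ _).mono fun z hz => hz.2

/-! ### Invariance of domain in the plane -/

lemma exists_eq_zero_of_eqOn_sphere {F : ℂ → ℂ} {c : ℂ} {R : ℝ} (hR : 0 < R)
    (hF : ContinuousOn F (closedBall c R)) (h : EqOn F (fun z => z - c) (sphere c R)) :
    ∃ z ∈ closedBall c R, F z = 0 := by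
  by_contra! hF0
  have hlog : LogEquivOn (closedBall c R) F 1 := .of_starConvex (mem_closedBall_self hR.le)
    ((convex_closedBall c R).starConvex (mem_closedBall_self hR.le)) hF hF0
  refine zero_ne_one (α := ℕ) <| eq_one_of_sub_logEquivOn_pow_sphere hR (a := c) (r := 1)
    continuousOn_const (by simp) ?_
  exact (LogEquivOn.of_eqOn h.symm).trans (by simpa using hlog.mono sphere_subset_closedBall)

lemma continuousOn_image_of_leftInvOn {X Y : Type*} [TopologicalSpace X] [TopologicalSpace Y]
    [T2Space Y] {s : Set X} (hs : IsCompact s) {f : X → Y} (hf : ContinuousOn f s) {g : Y → X}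
    (hg : LeftInvOn g f s) : ContinuousOn g (f '' s) := by
  rw [continuousOn_iff_isClosed]
  intro t ht
  refine ⟨f '' (s ∩ t), ((hs.inter_right ht).image_of_continuousOn
    (hf.mono inter_subset_left)).isClosed, ?_⟩
  ext y
  constructor
  · rintro ⟨hy, x, hx, rfl⟩
    rw [mem_preimage, hg hx] at hy
    exact ⟨⟨x, ⟨hx, hy⟩, rfl⟩, x, hx, rfl⟩
  · rintro ⟨⟨x, hx, rfl⟩, hy⟩
    exact ⟨by simpa [hg hx.1] using hx.2, hy⟩

/-- If `p` is missed, then pushing away from `p` makes `φ⁻¹ - c` nonvanishing on the image of the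
disk without changing it on the image of the circle. -/
lemma ball_subset_image_closedBall {φ : ℂ → ℂ} {c : ℂ} {r η : ℝ} (hr : 0 < r)
    (hφ : ContinuousOn φ (closedBall c r)) (hinj : InjOn φ (closedBall c r))
    (hφη : ∀ z ∈ sphere c r, 2 * η ≤ dist (φ z) (φ c)) :
    ball (φ c) η ⊆ φ '' closedBall c r := by
  intro p hpη
  by_contra hpK
  let ψ := Function.invFunOn φ (closedBall c r)
  have hψ : LeftInvOn ψ φ (closedBall c r) := hinj.leftInvOn_invFunOn
  have hD := isCompact_closedBall c r
  obtain ⟨G, hG, hG0, hGψ⟩ := exists_nonvanishing_eqOn_diff_ball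
    (hD.image_of_continuousOn hφ).isClosed hpK (pos_of_mem_ball hpη)
    (g := fun w => ψ w - c)
    ((continuousOn_image_of_leftInvOn hD hφ hψ).sub continuousOn_const) <| by
      rintro _ ⟨⟨z, hz, rfl⟩, hzp⟩ h
      rw [hψ hz, sub_eq_zero] at h
      exact hzp (h ▸ mem_ball_comm.1 hpη)
  obtain ⟨z, hz, hz0⟩ := exists_eq_zero_of_eqOn_sphere hr
    (hG.comp hφ (mapsTo_image φ _)) fun z hz => by
      have hzD := sphere_subset_closedBall hz
      have hfar : φ z ∉ ball p η := fun h => by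
        have := dist_triangle (φ z) p (φ c)
        linarith [hφη z hz, mem_ball.1 h, mem_ball.1 hpη]
      simp only [Function.comp_apply, hGψ ⟨mem_image_of_mem φ hzD, hfar⟩, hψ hzD]
  exact hG0 _ (mem_image_of_mem φ hz) hz0

lemma image_mem_nhds_of_injOn {φ : ℂ → ℂ} {s : Set ℂ} {c : ℂ} (hφ : ContinuousOn φ s)
    (hinj : InjOn φ s) (hs : s ∈ 𝓝 c) : φ '' s ∈ 𝓝 (φ c) := by
  obtain ⟨r, hr, hrs⟩ := nhds_basis_closedBall.mem_iff.1 hs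
  have hcS : φ c ∉ φ '' sphere c r := fun ⟨z, hz, hzc⟩ => ne_of_mem_sphere hz hr.ne' <|
    hinj (hrs (sphere_subset_closedBall hz)) (hrs (mem_closedBall_self hr.le)) hzc
  obtain ⟨ε, hε, hεS⟩ := Metric.isOpen_iff.1 ((isCompact_sphere c r).image_of_continuousOn
    (hφ.mono (sphere_subset_closedBall.trans hrs))).isClosed.isOpen_compl (φ c) hcS
  refine mem_of_superset (ball_mem_nhds _ (half_pos hε)) <|
    (ball_subset_image_closedBall hr (hφ.mono hrs) (hinj.mono hrs)
      fun z hz => not_lt.1 fun h => ?_).trans (image_mono hrs)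
  exact hεS (mem_ball.2 (by linarith)) (mem_image_of_mem φ hz)

lemma image_interior_of_injOn {φ : ℂ → ℂ} {s : Set ℂ} (hs : IsCompact s) (hφ : ContinuousOn φ s)
    (hinj : InjOn φ s) : φ '' interior s = interior (φ '' s) := by
  apply Subset.antisymm
  · rintro _ ⟨x, hx, rfl⟩
    exact mem_interior_iff_mem_nhds.2 <|
      image_mem_nhds_of_injOn hφ hinj (mem_interior_iff_mem_nhds.1 hx)
  · intro w hw
    obtain ⟨x, hx, rfl⟩ := interior_subset hw
    have hψ := hinj.leftInvOn_invFunOn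
    refine mem_image_of_mem φ <| mem_interior_iff_mem_nhds.2 ?_
    simpa only [hψ.image_image, hψ hx] using image_mem_nhds_of_injOn
      (continuousOn_image_of_leftInvOn hs hφ hψ) hψ.rightInvOn_image.injOn
      (mem_interior_iff_mem_nhds.1 hw)

section Disk

variable {φ : ℂ → ℂ} {U : Set ℂ} {c : ℂ} {R : ℝ}

lemma image_ball_eq_interior (hR : R ≠ 0) (hφ : ContinuousOn φ (closedBall c R))
    (hφU : BijOn φ (closedBall c R) U) : φ '' ball c R = interior U := by
  rw [← hφU.image_eq, ← image_interior_of_injOn (isCompact_closedBall c R) hφ hφU.injOn,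
    interior_closedBall c hR]

lemma image_sphere_eq_frontier (hR : R ≠ 0) (hφ : ContinuousOn φ (closedBall c R))
    (hφU : BijOn φ (closedBall c R) U) : φ '' sphere c R = frontier U := by
  have hU : IsClosed U :=
    hφU.image_eq ▸ ((isCompact_closedBall c R).image_of_continuousOn hφ).isClosed
  rw [hU.frontier_eq, ← image_ball_eq_interior hR hφ hφU, ← hφU.image_eq,
    ← hφU.injOn.image_sdiff_subset ball_subset_closedBall, closedBall_sdiff_ball]

end Disk

/-! ### Jordan regions -/

lemma exists_continuous_bijOn_of_homeomorph {X : Type u} {Y : Type v} [TopologicalSpace X]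
    [NormalSpace X] [TopologicalSpace Y] [TietzeExtension.{u, v} Y] {s : Set X} {t : Set Y}
    (hs : IsClosed s) (e : s ≃ₜ t) :
    ∃ φ : X → Y, Continuous φ ∧ BijOn φ s t ∧ ∀ x : s, φ x = e x := by
  obtain ⟨φ, hφ⟩ := ContinuousMap.exists_restrict_eq hs ⟨fun x => (e x : Y), by fun_prop⟩
  have hφe : ∀ x : s, φ x = e x := fun x => congrArg (fun F : C(s, Y) => F x) hφ
  refine ⟨φ, φ.continuous, ⟨fun x hx => ?_, fun x hx y hy hxy => ?_, fun y hy => ?_⟩, hφe⟩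
  · exact hφe ⟨x, hx⟩ ▸ (e ⟨x, hx⟩).2
  · rw [hφe ⟨x, hx⟩, hφe ⟨y, hy⟩] at hxy
    exact congrArg Subtype.val (e.injective (Subtype.ext hxy))
  · exact ⟨e.symm ⟨y, hy⟩, (e.symm ⟨y, hy⟩).2, by simp [hφe]⟩

/-- Jordan region: a closed topological disk in the plane. By the Jordan curve theorem and
Schoenflies this is the closure of the inside of a Jordan curve. -/
def IsJordanRegion (U : Set ℂ) : Prop :=
  Nonempty (closedBall (0 : ℂ) 1 ≃ₜ U)

namespace IsJordanRegion

variable {U : Set ℂ}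

lemma exists_continuous_bijOn (hU : IsJordanRegion U) :
    ∃ φ : ℂ → ℂ, Continuous φ ∧ BijOn φ (closedBall 0 1) U :=
  let ⟨φ, hφ, hφU, _⟩ := exists_continuous_bijOn_of_homeomorph isClosed_closedBall hU.some
  ⟨φ, hφ, hφU⟩

lemma exists_continuousOn_invOn (hU : IsJordanRegion U) :
    ∃ φ ψ : ℂ → ℂ, Continuous φ ∧ ContinuousOn ψ U ∧ BijOn φ (closedBall 0 1) U ∧
      InvOn ψ φ (closedBall 0 1) U :=
  let ⟨φ, hφ, hφU⟩ := hU.exists_continuous_bijOn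
  have hψ := hφU.invOn_invFunOn
  ⟨φ, _, hφ, hφU.image_eq ▸ continuousOn_image_of_leftInvOn (isCompact_closedBall 0 1)
    hφ.continuousOn hψ.1, hφU, hψ⟩

lemma isCompact (hU : IsJordanRegion U) : IsCompact U := by
  obtain ⟨φ, hφ, hφU⟩ := hU.exists_continuous_bijOn
  exact hφU.image_eq ▸ (isCompact_closedBall 0 1).image hφ

lemma isPathConnected_interior (hU : IsJordanRegion U) : IsPathConnected (interior U) := by
  obtain ⟨φ, hφ, hφU⟩ := hU.exists_continuous_bijOn
  rw [← image_ball_eq_interior one_ne_zero hφ.continuousOn hφU]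
  exact ((convex_ball 0 1).isPathConnected ⟨0, mem_ball_self one_pos⟩).image hφ

lemma frontier_nonempty (hU : IsJordanRegion U) : (frontier U).Nonempty := by
  obtain ⟨φ, hφ, hφU⟩ := hU.exists_continuous_bijOn
  rw [← image_sphere_eq_frontier one_ne_zero hφ.continuousOn hφU]
  exact (NormedSpace.sphere_nonempty.2 zero_le_one).image φ

lemma subset_closure_interior (hU : IsJordanRegion U) : U ⊆ closure (interior U) := by
  obtain ⟨φ, hφ, hφU⟩ := hU.exists_continuous_bijOn
  rw [← image_ball_eq_interior one_ne_zero hφ.continuousOn hφU, ← hφU.image_eq,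
    ← closure_ball (0 : ℂ) one_ne_zero]
  exact image_closure_subset_closure_image hφ

lemma logEquivOn_one (hU : IsJordanRegion U) {g : ℂ → ℂ} (hg : ContinuousOn g U)
    (hg0 : ∀ z ∈ U, g z ≠ 0) : LogEquivOn U g 1 := by
  obtain ⟨φ, ψ, hφ, hψ, hφU, hψφ⟩ := hU.exists_continuousOn_invOn
  have h0 : (0 : ℂ) ∈ closedBall (0 : ℂ) 1 := mem_closedBall_self zero_le_one
  have hlog : LogEquivOn (closedBall 0 1) (g ∘ φ) 1 := .of_starConvex h0
    ((convex_closedBall 0 1).starConvex h0) (hg.comp hφ.continuousOn hφU.mapsTo)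
    fun z hz => hg0 _ (hφU.mapsTo hz)
  have hlogU : LogEquivOn U ((g ∘ φ) ∘ ψ) 1 := hlog.comp hψ (hφU.symm hψφ.symm).mapsTo
  exact (LogEquivOn.of_eqOn fun z hz => by simp [hψφ.2 hz]).trans hlogU

/-- Along the images of the radii under a parametrization `φ` of `U` by the unit disk, the
equivalence spreads from the frontier to `U \ {φ 0}`, which contains circles about `φ 0`. -/
lemma eq_one_of_sub_logEquivOn_pow_frontier (hU : IsJordanRegion U) {w : ℂ} (hw : w ∈ interior U)
    {n : ℕ} {r : ℂ → ℂ} (hr : ContinuousOn r (frontier U)) (hr0 : ∀ z ∈ frontier U, r z ≠ 0)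
    (h : LogEquivOn (frontier U) (fun z => z - w) (r ^ n)) : n = 1 := by
  obtain ⟨φ, ψ, hφ, hψ, hφU, hψφ⟩ := hU.exists_continuousOn_invOn
  have h0 : (0 : ℂ) ∈ closedBall (0 : ℂ) 1 := mem_closedBall_self zero_le_one
  have hφ0 : φ 0 ∈ interior U := image_ball_eq_interior one_ne_zero hφ.continuousOn hφU ▸
    mem_image_of_mem φ (mem_ball_self one_pos)
  have hφS : MapsTo φ (sphere 0 1) (frontier U) := mapsTo_iff_image_subset.2
    (image_sphere_eq_frontier one_ne_zero hφ.continuousOn hφU).subset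
  have hnS : MapsTo NormedSpace.normalize (closedBall (0 : ℂ) 1 \ {0}) (sphere 0 1) :=
    fun x hx => mem_sphere_zero_iff_norm.2 (NormedSpace.norm_normalize_eq_one_iff.2 hx.2)
  have hn : ContinuousOn NormedSpace.normalize (closedBall (0 : ℂ) 1 \ {0}) :=
    continuousOn_normalize.mono fun x hx => hx.2
  have hcenter : LogEquivOn (frontier U) (fun z => z - φ 0) (r ^ n) := by
    refine .trans (.sub_of_joinedIn ?_) h
    exact (hU.isPathConnected_interior.joinedIn w hw _ hφ0).mono fun z hz hzU => hzU.2 hz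
  have hpunctured : LogEquivOn (closedBall 0 1 \ {0}) (fun x => φ x - φ 0)
      ((r ∘ φ ∘ NormedSpace.normalize) ^ n) := by
    refine .trans (.comp_normalize (by fun_prop) fun x hx hx0 => ?_) <|
      (hcenter.comp hφ.continuousOn hφS).comp hn hnS
    exact hx.2 (hφU.injOn hx.1 h0 (sub_eq_zero.1 hx0))
  obtain ⟨ε, hε, hεU⟩ := nhds_basis_closedBall.mem_iff.1 (mem_interior_iff_mem_nhds.1 hφ0)
  have hSU : sphere (φ 0) ε ⊆ U := sphere_subset_closedBall.trans hεU
  have hψS : MapsTo ψ (sphere (φ 0) ε) (closedBall 0 1 \ {0}) := fun z hz =>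
    ⟨(hφU.symm hψφ.symm).mapsTo (hSU hz), fun hz0 => ne_of_mem_sphere hz hε.ne' <| by
      rw [← hψφ.2 (hSU hz), hz0]⟩
  refine eq_one_of_sub_logEquivOn_pow_sphere hε (r := r ∘ φ ∘ NormedSpace.normalize ∘ ψ)
    (hr.comp (hφ.comp_continuousOn (hn.comp (hψ.mono hSU) hψS)) fun z hz => hφS (hnS (hψS hz)))
    (fun z hz => hr0 _ (hφS (hnS (hψS hz)))) ?_
  refine .trans (.of_eqOn fun z hz => ?_) (hpunctured.comp (hψ.mono hSU) hψS)
  simp only [Function.comp_apply, hψφ.2 (hSU hz)]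

end IsJordanRegion

/-! ### Zeros of holomorphic functions -/

section Zeros

variable {F : ℂ → ℂ} {O : Set ℂ} {a : ℂ}

lemma diffContOnCl_dslope (hO : IsOpen O) (hF : DiffContOnCl ℂ F O) (ha : a ∈ O) :
    DiffContOnCl ℂ (dslope F a) O where
  differentiableOn := (Complex.differentiableOn_dslope (hO.mem_nhds ha)).2 hF.differentiableOn
  continuousOn := (continuousOn_dslope (mem_of_superset (hO.mem_nhds ha) subset_closure)).2
    ⟨hF.continuousOn, hF.differentiableAt hO ha⟩

lemma exists_eq_pow_mul (hO : IsOpen O) (hF : DiffContOnCl ℂ F O) (ha : a ∈ O)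
    (hFa : ¬∀ᶠ z in 𝓝 a, F z = 0) :
    ∃ (n : ℕ) (h : ℂ → ℂ), DiffContOnCl ℂ h O ∧ h a ≠ 0 ∧ ∀ z, F z = (z - a) ^ n * h z := by
  obtain ⟨p, hp⟩ := hF.differentiableOn.analyticOnNhd hO a ha
  refine ⟨p.order, (Function.swap dslope a)^[p.order] F, ?_,
    hp.iterate_dslope_fslope_ne_zero (mt hp.locally_zero_iff.2 hFa),
    hp.eq_pow_order_mul_iterate_dslope⟩
  exact Function.Iterate.rec (fun h => DiffContOnCl ℂ h O) hF
    (fun _ h => diffContOnCl_dslope hO h ha) p.order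

lemma exists_eq_multiset_prod_mul (hO : IsOpen O) (hF : DiffContOnCl ℂ F O)
    (hF0 : ∀ a ∈ O, ¬∀ᶠ z in 𝓝 a, F z = 0) {s : Finset ℂ} (hs : ↑s ⊆ O) :
    ∃ (m : Multiset ℂ) (h : ℂ → ℂ), (∀ a ∈ m, a ∈ O) ∧ DiffContOnCl ℂ h O ∧
      (∀ a ∈ s, h a ≠ 0) ∧ ∀ z, F z = (m.map (z - ·)).prod * h z := by
  induction s using Finset.induction_on with
  | empty => exact ⟨0, F, by simp, hF, by simp, by simp⟩
  | insert a s _ ih =>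
    rw [Finset.coe_insert, insert_subset_iff] at hs
    obtain ⟨m, h, hm, hh, hhs, hFh⟩ := ih hs.2
    obtain ⟨n, k, hk, hka, hhk⟩ := exists_eq_pow_mul hO hh hs.1 fun h0 =>
      hF0 a hs.1 <| h0.mono fun z hz => by rw [hFh, hz, mul_zero]
    refine ⟨m + .replicate n a, k, fun b hb => ?_, hk, ?_, fun z => ?_⟩
    · rcases Multiset.mem_add.1 hb with hb | hb
      · exact hm b hb
      · exact Multiset.eq_of_mem_replicate hb ▸ hs.1
    · refine Finset.forall_mem_insert .. |>.2 ⟨hka, fun b hb => ?_⟩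
      exact right_ne_zero_of_mul (hhk b ▸ hhs b hb)
    · rw [hFh, hhk, Multiset.map_add, Multiset.prod_add, Multiset.map_replicate,
        Multiset.prod_replicate, mul_assoc]

lemma eventually_ne_zero_of_frontier (hO : IsOpen O) (hOc : IsPreconnected O)
    (hO' : (frontier O).Nonempty) (hF : DiffContOnCl ℂ F O) (hF0 : ∀ z ∈ frontier O, F z ≠ 0)
    (ha : a ∈ O) : ∀ᶠ z in 𝓝[≠] a, F z ≠ 0 := by
  by_contra h
  have hzero : EqOn F 0 O :=
    (hF.differentiableOn.analyticOnNhd hO).eqOn_zero_of_preconnected_of_frequently_eq_zero hOc ha h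
  obtain ⟨z, hz⟩ := hO'
  exact hF0 z hz <| hzero.of_subset_closure hF.continuousOn continuousOn_const subset_closure
    subset_rfl (frontier_subset_closure hz)

lemma finite_zeros_of_frontier (hO : IsOpen O) (hOc : IsPreconnected O)
    (hO' : (frontier O).Nonempty) (hOK : IsCompact (closure O)) (hF : DiffContOnCl ℂ F O)
    (hF0 : ∀ z ∈ frontier O, F z ≠ 0) : {z ∈ O | F z = 0}.Finite := by
  by_contra hinf
  obtain ⟨a, ha, hacc⟩ := Set.Infinite.exists_accPt_of_subset_isCompact hinf hOK
    fun z hz => subset_closure hz.1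
  have hZ : IsClosed (closure O ∩ F ⁻¹' {0}) :=
    hF.continuousOn.preimage_isClosed_of_isClosed isClosed_closure isClosed_singleton
  have haZ : a ∈ closure O ∩ F ⁻¹' {0} := hZ.closure_subset_iff.2
    (fun z hz => ⟨subset_closure hz.1, hz.2⟩) (mem_closure_iff_clusterPt.2 hacc.clusterPt)
  have haO : a ∈ O := by_contra fun h => hF0 a (hO.frontier_eq ▸ ⟨ha, h⟩) haZ.2
  refine accPt_iff_frequently_nhdsNE.1 hacc ?_
  filter_upwards [eventually_ne_zero_of_frontier hO hOc hO' hF hF0 haO] with z hz h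
  exact hz h.2

lemma exists_eq_multiset_prod_mul_nonvanishing (hO : IsOpen O) (hOc : IsPreconnected O)
    (hO' : (frontier O).Nonempty) (hOK : IsCompact (closure O)) (hF : DiffContOnCl ℂ F O)
    (hF0 : ∀ z ∈ frontier O, F z ≠ 0) :
    ∃ (m : Multiset ℂ) (h : ℂ → ℂ), (∀ a ∈ m, a ∈ O) ∧ DiffContOnCl ℂ h O ∧
      (∀ z ∈ closure O, h z ≠ 0) ∧ ∀ z, F z = (m.map (z - ·)).prod * h z := by
  have hfin := finite_zeros_of_frontier hO hOc hO' hOK hF hF0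
  obtain ⟨m, h, hm, hh, hhs, hFh⟩ := exists_eq_multiset_prod_mul hO hF
    (fun a ha h => (eventually_ne_zero_of_frontier hO hOc hO' hF hF0 ha).frequently
      (h.filter_mono nhdsWithin_le_nhds |>.mono fun z hz hz' => hz' hz))
    (s := hfin.toFinset) (by rw [hfin.coe_toFinset]; exact sep_subset _ _)
  refine ⟨m, h, hm, hh, fun z hz hz0 => ?_, hFh⟩
  have hFz : F z = 0 := by rw [hFh, hz0, mul_zero]
  have hzO : z ∈ O := by_contra fun h => hF0 z (hO.frontier_eq ▸ ⟨hz, h⟩) hFz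
  exact hhs z (hfin.mem_toFinset.2 ⟨hzO, hFz⟩) hz0

end Zeros

/-! ### The argument principle -/

lemma LogEquivOn.multiset_prod_sub {A : Set ℂ} {c : ℂ} {m : Multiset ℂ}
    (hm : ∀ a ∈ m, JoinedIn Aᶜ c a) :
    LogEquivOn A (fun z => (m.map (z - ·)).prod) ((fun z => z - c) ^ m.card) := by
  induction m using Multiset.induction_on with
  | empty => exact .of_eqOn fun z _ => by simp
  | cons a m ih =>
    simp only [Multiset.map_cons, Multiset.prod_cons, Multiset.card_cons, pow_succ']
    exact .mul (.sub_of_joinedIn (hm a (Multiset.mem_cons_self a m)))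
      (ih fun b hb => hm b (Multiset.mem_cons_of_mem hb))

namespace IsJordanRegion

variable {U : Set ℂ} {f : ℂ → ℂ}

lemma closure_interior (hU : IsJordanRegion U) : closure (interior U) = U :=
  hU.isCompact.isClosed.closure_interior_subset.antisymm hU.subset_closure_interior

lemma frontier_interior (hU : IsJordanRegion U) : frontier (interior U) = frontier U := by
  rw [isOpen_interior.frontier_eq, hU.closure_interior, hU.isCompact.isClosed.frontier_eq]

lemma exists_eq_multiset_prod_mul (hU : IsJordanRegion U) (hf : DiffContOnCl ℂ f (interior U))
    (hf0 : ∀ z ∈ frontier U, f z ≠ 0) :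
    ∃ (m : Multiset ℂ) (h : ℂ → ℂ), DiffContOnCl ℂ h (interior U) ∧ (∀ a ∈ m, a ∈ interior U) ∧
      (∀ z ∈ U, h z ≠ 0) ∧ (∀ z, f z = (m.map (z - ·)).prod * h z) ∧
      ∀ c ∈ interior U, LogEquivOn (frontier U) f ((fun z => z - c) ^ m.card) := by
  rw [← hU.frontier_interior] at hf0
  obtain ⟨m, h, hm, hh, hh0, hfh⟩ := exists_eq_multiset_prod_mul_nonvanishing isOpen_interior
    hU.isPathConnected_interior.isConnected.isPreconnected
    (hU.frontier_interior ▸ hU.frontier_nonempty) (hU.closure_interior.symm ▸ hU.isCompact) hf hf0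
  have hhc := hh.continuousOn
  rw [hU.closure_interior] at hh0 hhc
  refine ⟨m, h, hh, hm, hh0, hfh, fun c hc => ?_⟩
  have hprod : LogEquivOn (frontier U) (fun z => (m.map (z - ·)).prod)
      ((fun z => z - c) ^ m.card) := .multiset_prod_sub fun a ha =>
    (hU.isPathConnected_interior.joinedIn c hc a (hm a ha)).mono fun z hz hzU => hzU.2 hz
  have hh1 := (hU.logEquivOn_one hhc hh0).mono hU.isCompact.isClosed.frontier_subset
  exact (LogEquivOn.of_eqOn fun z _ => hfh z).trans
    (mul_one ((fun z => z - c) ^ m.card) ▸ hprod.mul hh1)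

end IsJordanRegion

/-! ### The mapping theorem -/

lemma hasDerivAt_of_sub_eventuallyEq_mul {𝕜 : Type*} [NontriviallyNormedField 𝕜] {f h : 𝕜 → 𝕜}
    {a w : 𝕜} (hf : (fun z => f z - w) =ᶠ[𝓝 a] fun z => (z - a) * h z)
    (hh : DifferentiableAt 𝕜 h a) : HasDerivAt f (h a) a := by
  have hmul : HasDerivAt (fun z => (z - a) * h z) (h a) a := by
    simpa using ((hasDerivAt_id' a).sub_const a).fun_mul hh.hasDerivAt
  exact (hasDerivAt_sub_const_iff w).1 (hmul.congr_of_eventuallyEq hf)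

lemma bijOn_of_interior_of_frontier {X Y : Type*} [TopologicalSpace X] [TopologicalSpace Y]
    {U : Set X} {V : Set Y} {f : X → Y} (hU : IsClosed U) (hV : IsClosed V)
    (hi : BijOn f (interior U) (interior V)) (hb : BijOn f (frontier U) (frontier V)) :
    BijOn f U V := by
  rw [← hU.closure_eq, ← hV.closure_eq, closure_eq_interior_union_frontier,
    closure_eq_interior_union_frontier]
  refine hi.union hb <| (injOn_union disjoint_interior_frontier).2 ⟨hi.injOn, hb.injOn, ?_⟩
  exact fun x hx y hy h => disjoint_interior_frontier.ne_of_mem (hi.mapsTo hx) (hb.mapsTo hy) h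

namespace IsJordanRegion

variable {U V : Set ℂ} {f : ℂ → ℂ}

lemma continuousOn_frontier (hU : IsJordanRegion U) (hf : DiffContOnCl ℂ f (interior U)) :
    ContinuousOn f (frontier U) :=
  hf.continuousOn.mono <| hU.frontier_interior ▸ frontier_subset_closure

lemma mapsTo_of_frontier (hU : IsJordanRegion U) (hV : IsJordanRegion V)
    (hf : DiffContOnCl ℂ f (interior U)) (hfb : MapsTo f (frontier U) (frontier V)) :
    MapsTo f U V := by
  intro z hz
  by_contra hw
  have hVc := hV.isCompact.isClosed
  set w := f z with hwz
  have hfw : ∀ x ∈ frontier U, f x - w ≠ 0 := fun x hx h =>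
    hw (sub_eq_zero.1 h ▸ hVc.frontier_subset (hfb hx))
  obtain ⟨m, h, -, -, hh0, hfh, hlog⟩ := hU.exists_eq_multiset_prod_mul (hf.sub_const w) hfw
  obtain ⟨c, hc⟩ := hU.isPathConnected_interior.nonempty
  have hf1 : LogEquivOn (frontier U) (fun x => f x - w) 1 := by
    have hV1 : LogEquivOn V (fun y => y - w) 1 := hV.logEquivOn_one (by fun_prop)
      fun y hy h => hw (sub_eq_zero.1 h ▸ hy)
    exact hV1.comp (hU.continuousOn_frontier hf) fun x hx => hVc.frontier_subset (hfb hx)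
  have hpow : LogEquivOn (frontier U) (fun x => x - c) ((fun x => x - c) ^ (m.card + 1)) := by
    have := LogEquivOn.mul (.of_eqOn (eqOn_refl (fun x => x - c) _)) (hf1.symm.trans (hlog c hc))
    rwa [mul_one, ← pow_succ'] at this
  have hm : m = 0 := by
    simpa using hU.eq_one_of_sub_logEquivOn_pow_frontier hc (by fun_prop)
      (fun x hx => sub_ne_zero.2 fun h : x = c => hx.2 (h ▸ hc)) hpow
  refine hh0 z hz ?_
  simpa [hm, ← hwz] using (hfh z).symm

lemma exists_sub_eq_sub_mul (hU : IsJordanRegion U) (hV : IsJordanRegion V)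
    (hf : DiffContOnCl ℂ f (interior U)) (hfb : BijOn f (frontier U) (frontier V)) {w : ℂ}
    (hw : w ∈ interior V) :
    ∃ a ∈ interior U, ∃ h : ℂ → ℂ, DiffContOnCl ℂ h (interior U) ∧ (∀ z ∈ U, h z ≠ 0) ∧
      ∀ z, f z - w = (z - a) * h z := by
  obtain ⟨m, h, hh, hm, hh0, hfh, hlog⟩ := hU.exists_eq_multiset_prod_mul (hf.sub_const w)
    fun z hz h => (hfb.mapsTo hz).2 ((sub_eq_zero.1 h).symm ▸ hw)
  obtain ⟨c, hc⟩ := hU.isPathConnected_interior.nonempty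
  have hinv := hfb.invOn_invFunOn
  set k := Function.invFunOn f (frontier U)
  have hkb : MapsTo k (frontier V) (frontier U) := (hfb.symm hinv.symm).mapsTo
  have hk : ContinuousOn k (frontier V) := hfb.image_eq ▸ continuousOn_image_of_leftInvOn
    (hU.isCompact.of_isClosed_subset isClosed_frontier hU.isCompact.isClosed.frontier_subset)
    (hU.continuousOn_frontier hf) hinv.1
  have hwk : LogEquivOn (frontier V) (fun y => y - w) ((fun y => k y - c) ^ m.card) :=
    (LogEquivOn.of_eqOn fun y hy => by simp [hinv.2 hy]).trans ((hlog c hc).comp hk hkb)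
  have hcard : m.card = 1 := hV.eq_one_of_sub_logEquivOn_pow_frontier hw (by fun_prop)
    (fun y hy => sub_ne_zero.2 fun h : k y = c => (hkb hy).2 (h ▸ hc)) hwk
  obtain ⟨a, rfl⟩ := Multiset.card_eq_one.1 hcard
  exact ⟨a, hm a (Multiset.mem_singleton_self a), h, hh, hh0, by simpa using hfh⟩

lemma bijOn_interior (hU : IsJordanRegion U) (hV : IsJordanRegion V)
    (hf : DiffContOnCl ℂ f (interior U)) (hfb : BijOn f (frontier U) (frontier V)) :
    BijOn f (interior U) (interior V) := by
  have hsurj : SurjOn f (interior U) (interior V) := fun w hw => by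
    obtain ⟨a, ha, h, -, -, hfh⟩ := exists_sub_eq_sub_mul hU hV hf hfb hw
    exact ⟨a, ha, sub_eq_zero.1 (by simp [hfh])⟩
  have hmaps : MapsTo f (interior U) (interior V) := by
    refine mapsTo_iff_image_subset.2 <| interior_maximal
      ((hU.mapsTo_of_frontier hV hf hfb.mapsTo).mono_left interior_subset).image_subset ?_
    refine ((hf.differentiableOn.analyticOnNhd isOpen_interior).is_constant_or_isOpen
      hU.isPathConnected_interior.isConnected.isPreconnected).resolve_left ?_ _ subset_rfl
      isOpen_interior
    rintro ⟨w, hw⟩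
    obtain ⟨y, hy⟩ := hV.isPathConnected_interior.nonempty
    have hVw : interior V ⊆ {w} := hsurj.trans (image_subset_iff.2 hw)
    exact (infinite_of_mem_nhds y (isOpen_interior.mem_nhds hy)) ((finite_singleton w).subset hVw)
  refine ⟨hmaps, fun x hx y hy hxy => ?_, hsurj⟩
  obtain ⟨a, -, h, -, hh0, hfh⟩ := exists_sub_eq_sub_mul hU hV hf hfb (hmaps hx)
  have heq : ∀ z ∈ interior U, f z = f x → z = a := fun z hz hzx => by
    simpa [hzx, sub_eq_zero, hh0 z (interior_subset hz)] using hfh z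
  rw [heq x hx rfl, heq y hy hxy.symm]

lemma differentiableOn_of_invOn (hU : IsJordanRegion U) (hV : IsJordanRegion V) {g : ℂ → ℂ}
    (hf : DiffContOnCl ℂ f (interior U)) (hfb : BijOn f (frontier U) (frontier V))
    (hg : ContinuousOn g V) (hgf : InvOn g f U V) : DifferentiableOn ℂ g (interior V) := by
  intro w hw
  obtain ⟨a, ha, h, hh, hh0, hfh⟩ := exists_sub_eq_sub_mul hU hV hf hfb hw
  have hga : g w = a := by
    rw [← hgf.1 (interior_subset ha), sub_eq_zero.1 (show f a - w = 0 by simp [hfh])]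
  have hderiv : HasDerivAt f (h (g w)) (g w) := hasDerivAt_of_sub_eventuallyEq_mul (w := w)
    (by simp [hfh, hga]) (hga ▸ hh.differentiableAt isOpen_interior ha)
  refine (HasDerivAt.of_local_left_inverse (hg.continuousAt (mem_interior_iff_mem_nhds.1 hw))
    hderiv (hga ▸ hh0 a (interior_subset ha)) ?_).differentiableAt.differentiableWithinAt
  filter_upwards [mem_interior_iff_mem_nhds.1 hw] using hgf.2

end IsJordanRegion

end JordanRegion

open JordanRegion

/-- Argument-principle mapping theorem for Jordan regions (bounded case). -/
theorem jordan_region_mapping (U V : Set ℂ) (hUc : IsCompact U) (hVc : IsCompact V)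
    (hU : Nonempty (Metric.closedBall (0 : ℂ) 1 ≃ₜ U))
    (hV : Nonempty (Metric.closedBall (0 : ℂ) 1 ≃ₜ V))
    (f : ℂ → ℂ) (hfc : ContinuousOn f U) (hfa : DifferentiableOn ℂ f (interior U))
    (hbd : ∃ h : frontier U ≃ₜ frontier V, ∀ z : frontier U, (h z : ℂ) = f z) :
    Set.BijOn f U V ∧
    Set.BijOn f (interior U) (interior V) ∧
    ∃ g : ℂ → ℂ, ContinuousOn g V ∧ DifferentiableOn ℂ g (interior V) ∧
      (∀ z ∈ U, g (f z) = z) ∧ (∀ w ∈ V, f (g w) = w) := by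
  have hf : DiffContOnCl ℂ f (interior U) :=
    ⟨hfa, (IsJordanRegion.closure_interior hU).symm ▸ hfc⟩
  obtain ⟨e, he⟩ := hbd
  obtain ⟨φ, -, hφ, hφe⟩ := exists_continuous_bijOn_of_homeomorph isClosed_frontier e
  have hfb : BijOn f (frontier U) (frontier V) :=
    hφ.congr fun z hz => (hφe ⟨z, hz⟩).trans (he ⟨z, hz⟩)
  have hfi : BijOn f (interior U) (interior V) := IsJordanRegion.bijOn_interior hU hV hf hfb
  have hfUV : BijOn f U V := bijOn_of_interior_of_frontier hUc.isClosed hVc.isClosed hfi hfb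
  have hinv := hfUV.invOn_invFunOn
  have hg : ContinuousOn (Function.invFunOn f U) V :=
    hfUV.image_eq ▸ continuousOn_image_of_leftInvOn hUc hfc hinv.1
  exact ⟨hfUV, hfi, _, hg,
    IsJordanRegion.differentiableOn_of_invOn hU hV hf hfb hg hinv, hinv.1, hinv.2⟩
end

section
/- Schwarzian derivative of p: for every τ ∈ ℍ with E2(τ) ≠ 0 and E4(τ) ≠ 0, one has (2·p'(τ)·p'''(τ) − 3·p''(τ)²)/(2·p'(τ)²) = −1152·π²·Δ(τ)/E4(τ)², where p', p'', p''' denote the first, second, and third complex derivatives of p. -/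
/-!
Write `D = (2πi)⁻¹ d/dτ` and let `∂ₖ = D - (k / 12) E₂` be the Serre derivative. The functions
`∂₁ E₂`, `∂₄ E₄`, `∂₆ E₆` transform like modular forms of level one and weight less than `12`, so
they are determined by their values at `i∞`: they are `-E₄ / 12`, `-E₆ / 3`, `-E₄² / 2`
(Ramanujan's identities).

The first identity says `p' = E₄ / E₂²`. In terms of `g = p'' / p'` the Schwarzian derivative is
`g' - g² / 2`, and the three identities express both terms through `E₂`, `E₄ / E₂` and `E₆ / E₄`.
All terms containing `E₂` cancel in the difference, which leaves a multiple of `E₄ - E₆² / E₄²`.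
-/

/-- `q = exp(2πiτ)`. -/
noncomputable def qexp (τ : ℂ) : ℂ := Complex.exp (2 * Real.pi * Complex.I * τ)

/-- Divisor power sum `σ_k(n) = ∑_{d | n} d^k`, as a complex number. -/
noncomputable def sigmaC (k n : ℕ) : ℂ := ∑ d ∈ Nat.divisors n, (d : ℂ) ^ k

/-- Eisenstein series `E₂`. -/
noncomputable def E2 (τ : ℂ) : ℂ := 1 - 24 * ∑' n : ℕ, sigmaC 1 (n + 1) * qexp τ ^ (n + 1)

/-- Eisenstein series `E₄`. -/
noncomputable def E4 (τ : ℂ) : ℂ := 1 + 240 * ∑' n : ℕ, sigmaC 3 (n + 1) * qexp τ ^ (n + 1)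

/-- Eisenstein series `E₆`. -/
noncomputable def E6 (τ : ℂ) : ℂ := 1 - 504 * ∑' n : ℕ, sigmaC 5 (n + 1) * qexp τ ^ (n + 1)

/-- The discriminant form `Δ = (E₄³ - E₆²)/1728`. -/
noncomputable def Δfun (τ : ℂ) : ℂ := (E4 τ ^ 3 - E6 τ ^ 2) / 1728

/-- The ratio of quasi-periods `p(τ) = τ - 6i/(π E₂(τ))`. -/
noncomputable def pfun (τ : ℂ) : ℂ := τ - 6 * Complex.I / (Real.pi * E2 τ)

open UpperHalfPlane hiding I
open Real Complex Filter Function ModularForm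
open Derivative (serreDerivative)
open scoped Manifold MatrixGroups ModularForm Topology Derivative

section Schwarzian

variable {𝕜 : Type*} [NontriviallyNormedField 𝕜] {f : 𝕜 → 𝕜} {z : 𝕜}

/-- The Schwarzian derivative `{f, z} = (f'' / f')' - (f'' / f')² / 2`, with `f'' / f'` encoded as
the logarithmic derivative of `f'`. -/
noncomputable def schwarzianDeriv (f : 𝕜 → 𝕜) (z : 𝕜) : 𝕜 :=
  deriv (logDeriv (deriv f)) z - logDeriv (deriv f) z ^ 2 / 2

theorem schwarzianDeriv_eq_div [NeZero (2 : 𝕜)] (h₁ : DifferentiableAt 𝕜 (deriv f) z)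
    (h₂ : DifferentiableAt 𝕜 (deriv (deriv f)) z) (h₀ : deriv f z ≠ 0) :
    schwarzianDeriv f z =
      (2 * deriv f z * deriv (deriv (deriv f)) z - 3 * deriv (deriv f) z ^ 2) /
        (2 * deriv f z ^ 2) := by
  have h2 : (2 : 𝕜) ≠ 0 := two_ne_zero
  rw [schwarzianDeriv, logDeriv, deriv_div h₂ h₁ h₀, Pi.div_apply]
  field_simp
  ring

end Schwarzian

theorem norm_normalizedDerivOfComplex_le {F : ℍ → ℂ} (hF : MDiff F) {M r : ℝ} {z : ℍ}
    (hr : 0 < r) (hrz : r < z.im) (hM : ∀ w : ℍ, z.im - r ≤ w.im → ‖F w‖ ≤ M) :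
    ‖D F z‖ ≤ (2 * π)⁻¹ * (M / r) := by
  have him : ∀ w ∈ Metric.closedBall (z : ℂ) r, z.im - r ≤ w.im := fun w hw ↦ by
    have := (abs_le.mp ((abs_im_le_norm (w - z)).trans (mem_closedBall_iff_norm.mp hw))).1
    rw [sub_im, coe_im] at this
    linarith
  have hsub : Metric.closedBall (z : ℂ) r ⊆ {w | 0 < w.im} := fun w hw ↦
    (sub_pos.mpr hrz).trans_le (him w hw)
  have hdiff : DiffContOnCl ℂ (F ∘ ofComplex) (Metric.ball z r) :=
    ((UpperHalfPlane.mdifferentiable_iff.mp hF).mono hsub).diffContOnCl_ball subset_rfl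
  have hcauchy : ‖deriv (F ∘ ofComplex) z‖ ≤ M / r :=
    norm_deriv_le_of_forall_mem_sphere_norm_le hr hdiff fun w hw ↦ by
      have hw' := Metric.sphere_subset_closedBall hw
      rw [comp_apply, ofComplex_apply_of_im_pos (hsub hw')]
      exact hM _ (him w hw')
  rw [Derivative.normalizedDerivOfComplex, norm_mul]
  gcongr
  simp [abs_of_pos pi_pos]

theorem tendsto_normalizedDerivOfComplex_atImInfty {F : ℍ → ℂ} (hF : MDiff F)
    (hbdd : IsBoundedAtImInfty F) : Tendsto (D F) atImInfty (𝓝 0) := by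
  obtain ⟨M, A, hM⟩ := isBoundedAtImInfty_iff.mp hbdd
  have him : Tendsto UpperHalfPlane.im atImInfty atTop := tendsto_comap
  have hlim : Tendsto (fun z : ℍ ↦ (2 * π)⁻¹ * (M / (z.im / 2))) atImInfty (𝓝 0) := by
    simpa using ((him.atTop_div_const two_pos).const_div_atTop M).const_mul (2 * π)⁻¹
  refine squeeze_zero_norm' ?_ hlim
  filter_upwards [him.eventually_ge_atTop (2 * A)] with z hz
  exact norm_normalizedDerivOfComplex_le hF (half_pos z.im_pos) (half_lt_self z.im_pos)
    fun w hw ↦ hM w (by linarith)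

theorem tendsto_atImInfty_of_hasSum_qExpansion {h : ℝ} (hh : 0 < h) {f : ℍ → ℂ} {c : ℕ → ℂ}
    (hf : ∀ τ : ℍ, HasSum (fun m ↦ c m • Periodic.qParam h τ ^ m) (f τ)) :
    Tendsto f atImInfty (𝓝 (c 0)) := by
  let g : ℍ → ℂ := fun τ ↦ (Periodic.qParam h τ)⁻¹ * (f τ - c 0)
  have hq (τ : ℍ) : Periodic.qParam h τ ≠ 0 := Periodic.qParam_ne_zero _
  have hg (τ : ℍ) : HasSum (fun m ↦ c (m + 1) • Periodic.qParam h τ ^ m) (g τ) := by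
    convert! ((hasSum_nat_add_iff' 1).mpr (hf τ)).mul_left (Periodic.qParam h τ)⁻¹ using 2 with m
    · rw [pow_succ', smul_eq_mul, smul_eq_mul, mul_left_comm, inv_mul_cancel_left₀ (hq τ)]
    · simp
  have hbdd : g =O[atImInfty] (1 : ℍ → ℝ) := isBoundedAtImInfty_of_hasSum_qExpansion hh hg
  have hqg : Tendsto (fun τ : ℍ ↦ Periodic.qParam h τ * g τ) atImInfty (𝓝 0) :=
    (qParam_tendsto_atImInfty hh).zero_mul_isBoundedUnder_le hbdd.isBoundedUnder_le
  simpa [g, mul_inv_cancel_left₀ (hq _)] using hqg.add_const (c 0)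

theorem tendsto_E2_atImInfty : Tendsto EisensteinSeries.E2 atImInfty (𝓝 1) :=
  tendsto_atImInfty_of_hasSum_qExpansion (f := EisensteinSeries.E2) one_pos <| by
    simpa only [Periodic.qParam, ofReal_one, div_one] using EisensteinSeries.hasSum_qExpansion_E2

theorem tendsto_E_atImInfty {k : ℕ} (hk : 3 ≤ k) (hk2 : Even k) :
    Tendsto (E hk) atImInfty (𝓝 1) := by
  rw [← EisensteinSeries.E_qExpansion_coeff_zero hk hk2]
  exact tendsto_atImInfty_of_hasSum_qExpansion one_pos
    (ModularForm.hasSum_qExpansion _ one_pos one_mem_strictPeriods_SL)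

theorem tendsto_E₄_atImInfty : Tendsto E₄ atImInfty (𝓝 1) :=
  tendsto_E_atImInfty _ ⟨2, rfl⟩

theorem tendsto_E₆_atImInfty : Tendsto E₆ atImInfty (𝓝 1) :=
  tendsto_E_atImInfty _ ⟨3, rfl⟩

theorem tendsto_serreDerivative_atImInfty (k : ℂ) {F : ℍ → ℂ} {c : ℂ} (hF : MDiff F)
    (hc : Tendsto F atImInfty (𝓝 c)) :
    Tendsto (serreDerivative k F) atImInfty (𝓝 (-(k * 12⁻¹ * c))) := by
  have hD := tendsto_normalizedDerivOfComplex_atImInfty hF (hc.isBigO_one ℝ)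
  simpa using hD.sub ((tendsto_E2_atImInfty.const_mul (k * 12⁻¹)).mul hc)

theorem eq_zero_of_slash_invariant {k : ℤ} (hk : k < 12) {f : ℍ → ℂ} (hf : MDiff f)
    (hslash : ∀ γ : SL(2, ℤ), f ∣[k] γ = f) (h0 : IsZeroAtImInfty f) : f = 0 := by
  let g : CuspForm 𝒮ℒ k :=
    { toFun := f
      slash_action_eq' := fun _ ⟨γ, hγ⟩ ↦ hγ ▸ hslash γ
      holo' := hf
      zero_at_cusps' := fun {c} hc ↦ by
        rw [Subgroup.IsArithmetic.isCusp_iff_isCusp_SL2Z] at hc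
        rw [OnePoint.isZeroAt_iff_forall_SL2Z hc]
        intro γ _
        rwa [hslash γ] }
  have hg : g = 0 := rank_zero_iff_forall_zero.mp (CuspForm.rank_eq_zero_of_weight_lt_twelve hk) g
  exact congrArg DFunLike.coe hg

theorem eq_smul_of_slash_invariant {k : ℤ} (hk : k < 12) {f : ℍ → ℂ} {g : ModularForm 𝒮ℒ k}
    {c : ℂ} (hf : MDiff f) (hslash : ∀ γ : SL(2, ℤ), f ∣[k] γ = f)
    (hfc : Tendsto f atImInfty (𝓝 c)) (hg : Tendsto g atImInfty (𝓝 1)) : f = c • ⇑g := by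
  have hgslash (γ : SL(2, ℤ)) : ⇑g ∣[k] γ = g :=
    SlashInvariantForm.slash_action_eqn g _ ⟨γ, rfl⟩
  have hzero : Tendsto (f - c • ⇑g) atImInfty (𝓝 0) := by
    simpa using! hfc.sub (hg.const_smul c)
  refine sub_eq_zero.mp
    (eq_zero_of_slash_invariant hk (hf.sub (g.holo'.const_smul c)) (fun γ ↦ ?_) hzero)
  rw [sub_eq_add_neg, SlashAction.add_slash, SlashAction.neg_slash, ModularForm.SL_smul_slash,
    hslash, hgslash]

theorem serreDerivative_eq_smul {k : ℤ} (hk : k < 10) {f : ModularForm 𝒮ℒ k}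
    {g : ModularForm 𝒮ℒ (k + 2)} {c : ℂ} (hf : Tendsto f atImInfty (𝓝 c))
    (hg : Tendsto g atImInfty (𝓝 1)) : serreDerivative k f = (-(k * 12⁻¹ * c)) • ⇑g :=
  eq_smul_of_slash_invariant (by lia) (Derivative.serreDerivative_mdifferentiable _ f.holo')
    (fun γ ↦ Derivative.serreDerivative_slash_invariant f.holo'
      (SlashInvariantForm.slash_action_eqn f _ ⟨γ, rfl⟩))
    (tendsto_serreDerivative_atImInfty k f.holo' hf) hg

theorem mdifferentiable_D2 (γ : SL(2, ℤ)) : MDiff (EisensteinSeries.D2 γ) :=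
  (mdifferentiable_inv_denom (γ : GL (Fin 2) ℝ)).const_smul (2 * π * I * γ 1 0 : ℂ)

theorem normalizedDerivOfComplex_D2 (γ : SL(2, ℤ)) :
    D (EisensteinSeries.D2 γ) = (4 * π ^ 2 : ℂ)⁻¹ • EisensteinSeries.D2 γ ^ 2 := by
  ext z
  have hderiv := (hasDerivAt_denom_zpow (γ : GL (Fin 2) ℝ) (-1) z).const_mul
    (2 * π * I * (γ 1 0 : ℂ))
  have heq : EisensteinSeries.D2 γ ∘ ofComplex =ᶠ[𝓝 (z : ℂ)]
      fun w ↦ 2 * π * I * (γ 1 0 : ℂ) * denom γ w ^ (-1 : ℤ) := by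
    filter_upwards [isOpen_upperHalfPlaneSet.mem_nhds z.im_pos] with w hw
    simp [EisensteinSeries.D2, ofComplex_apply_of_im_pos hw, div_eq_mul_inv]
  have hdenom := denom_ne_zero γ z
  rw [Derivative.normalizedDerivOfComplex, heq.deriv_eq, hderiv.deriv]
  simp only [mul_inv_rev, inv_I, neg_mul, Fin.isValue, Int.reduceNeg, Int.cast_neg, Int.cast_one,
    Matrix.SpecialLinearGroup.coe_GL_coe_matrix, Matrix.SpecialLinearGroup.map_apply_coe,
    RingHom.mapMatrix_apply, Int.coe_castRingHom, Matrix.map_apply, ofReal_intCast, one_mul,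
    Int.reduceSub, zpow_neg, zpow_ofNat, mul_neg, neg_neg, Pi.smul_apply, Pi.pow_apply,
    EisensteinSeries.D2, smul_eq_mul]
  field_simp
  norm_num [mul_comm]

theorem E2_slash_eq_sub_smul_D2 (γ : SL(2, ℤ)) :
    EisensteinSeries.E2 ∣[(2 : ℤ)] γ =
      EisensteinSeries.E2 - (3 / π ^ 2 : ℂ) • EisensteinSeries.D2 γ := by
  rw [EisensteinSeries.E2_slash_action, riemannZeta_two]
  congr 2
  field_simp
  norm_num

/-- Although `E₂` has weight `2`, it is `∂₁` that is invariant: in `∂₁ E₂ = ∂₂ E₂ + E₂² / 12` the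
terms in `D2 γ` by which the two summands fail to be invariant cancel. -/
theorem serreDerivative_one_E2_slash (γ : SL(2, ℤ)) :
    serreDerivative 1 EisensteinSeries.E2 ∣[(4 : ℤ)] γ =
      serreDerivative 1 EisensteinSeries.E2 := by
  have hsplit : serreDerivative 1 EisensteinSeries.E2 = serreDerivative 2 EisensteinSeries.E2 +
      (12⁻¹ : ℂ) • (EisensteinSeries.E2 * EisensteinSeries.E2) := by
    ext z
    simp only [Derivative.serreDerivative_apply, Pi.add_apply, Pi.smul_apply, Pi.mul_apply,
      smul_eq_mul]
    ring
  have hsq : (EisensteinSeries.E2 * EisensteinSeries.E2) ∣[(4 : ℤ)] γ =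
      EisensteinSeries.E2 ∣[(2 : ℤ)] γ * EisensteinSeries.E2 ∣[(2 : ℤ)] γ :=
    ModularForm.mul_slash_SL2 2 2 γ _ _
  have hserre : serreDerivative 2 EisensteinSeries.E2 ∣[(4 : ℤ)] γ =
      serreDerivative 2 (EisensteinSeries.E2 ∣[(2 : ℤ)] γ) :=
    mod_cast Derivative.serreDerivative_slash_equivariant (k := 2) E2_mdifferentiable
  have hD2 := mdifferentiable_D2 γ
  rw [hsplit, SlashAction.add_slash, ModularForm.SL_smul_slash, hsq, hserre,
    E2_slash_eq_sub_smul_D2,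
    Derivative.serreDerivative_sub _ _ _ E2_mdifferentiable (hD2.const_smul _),
    Derivative.serreDerivative_smul _ _ _ hD2]
  ext z
  simp only [Derivative.serreDerivative_eq, normalizedDerivOfComplex_D2, mul_inv_rev,
    Pi.smul_apply, Pi.pow_apply, smul_eq_mul, Pi.add_apply, Pi.sub_apply, Pi.mul_apply]
  field_simp
  ring

theorem serreDerivative_one_E2 :
    serreDerivative 1 EisensteinSeries.E2 = (-12⁻¹ : ℂ) • ⇑E₄ :=
  eq_smul_of_slash_invariant (by norm_num)
    (Derivative.serreDerivative_mdifferentiable _ E2_mdifferentiable)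
    serreDerivative_one_E2_slash
    (by simpa using! tendsto_serreDerivative_atImInfty 1 E2_mdifferentiable tendsto_E2_atImInfty)
    tendsto_E₄_atImInfty

theorem serreDerivative_four_E₄ : serreDerivative 4 E₄ = (-3⁻¹ : ℂ) • ⇑E₆ := by
  convert! serreDerivative_eq_smul (by norm_num) tendsto_E₄_atImInfty tendsto_E₆_atImInfty using 2
  norm_num

theorem serreDerivative_six_E₆ : serreDerivative 6 E₆ = (-2⁻¹ : ℂ) • (⇑E₄ * ⇑E₄) := by
  have hsq : Tendsto (E₄.mul E₄) atImInfty (𝓝 1) := by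
    simpa using! tendsto_E₄_atImInfty.mul tendsto_E₄_atImInfty
  convert! serreDerivative_eq_smul (by norm_num) tendsto_E₆_atImInfty hsq using 2
  norm_num

theorem sigmaC_eq_sigma (k n : ℕ) : sigmaC k n = ArithmeticFunction.sigma k n := by
  simp [sigmaC, ArithmeticFunction.sigma_apply]

theorem E2_coe (z : ℍ) : E2 z = EisensteinSeries.E2 z := by
  rw [EisensteinSeries.E2_eq_tsum_cexp, tsum_pnat_eq_tsum_succ
    (f := fun n ↦ (ArithmeticFunction.sigma 1 n : ℂ) * cexp (2 * π * I * z) ^ n)]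
  simp only [E2, sigmaC_eq_sigma, qexp]

theorem eisensteinSeries_eq_tsum_sigmaC {k : ℕ} (hk : 3 ≤ k) (hk2 : Even k) (z : ℍ) :
    E hk z = 1 - 2 * k / bernoulli k * ∑' n : ℕ, sigmaC (k - 1) (n + 1) * qexp z ^ (n + 1) := by
  have h := EisensteinSeries.q_expansion_bernoulli hk hk2 z
  simp_rw [zpow_natCast] at h
  rw [h, tsum_pnat_eq_tsum_succ
    (f := fun n ↦ (ArithmeticFunction.sigma (k - 1) n : ℂ) * cexp (2 * π * I * z) ^ n)]
  simp only [sigmaC_eq_sigma, qexp]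

theorem E4_coe (z : ℍ) : E4 z = E₄ z := by
  rw [eisensteinSeries_eq_tsum_sigmaC _ ⟨2, rfl⟩, show bernoulli 4 = -1 / 30 by decide +kernel]
  norm_num [E4]

theorem E6_coe (z : ℍ) : E6 z = E₆ z := by
  rw [eisensteinSeries_eq_tsum_sigmaC _ ⟨3, rfl⟩, show bernoulli 6 = 1 / 42 by decide +kernel]
  norm_num [E6]

theorem hasDerivAt_of_coe_eq {F : ℍ → ℂ} (hF : MDiff F) {f : ℂ → ℂ} (hf : ∀ z : ℍ, f z = F z)
    (z : ℍ) : HasDerivAt f (2 * π * I * D F z) z := by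
  have heq : f =ᶠ[𝓝 (z : ℂ)] F ∘ ofComplex := by
    filter_upwards [isOpen_upperHalfPlaneSet.mem_nhds z.im_pos] with w hw
    simpa [ofComplex_apply_of_im_pos hw] using hf ⟨w, hw⟩
  rw [Derivative.normalizedDerivOfComplex, mul_inv_cancel_left₀ two_pi_I_ne_zero]
  exact (UpperHalfPlane.mdifferentiableAt_iff.mp (hF z)).hasDerivAt.congr_of_eventuallyEq heq

section Derivatives

variable {τ : ℂ}

theorem hasDerivAt_E2 (hτ : 0 < τ.im) :
    HasDerivAt E2 (2 * π * I * ((E2 τ ^ 2 - E4 τ) / 12)) τ := by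
  lift τ to ℍ using hτ
  convert! hasDerivAt_of_coe_eq E2_mdifferentiable E2_coe τ using 2
  have h := congrFun serreDerivative_one_E2 τ
  simp only [Derivative.serreDerivative_apply, Pi.smul_apply, smul_eq_mul] at h
  rw [E2_coe, E4_coe]
  linear_combination -h

theorem hasDerivAt_E4 (hτ : 0 < τ.im) :
    HasDerivAt E4 (2 * π * I * ((E2 τ * E4 τ - E6 τ) / 3)) τ := by
  lift τ to ℍ using hτ
  convert! hasDerivAt_of_coe_eq E₄.holo' E4_coe τ using 2
  have h := congrFun serreDerivative_four_E₄ τ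
  simp only [Derivative.serreDerivative_apply, Pi.smul_apply, smul_eq_mul] at h
  rw [E2_coe, E4_coe, E6_coe]
  linear_combination -h

theorem hasDerivAt_E6 (hτ : 0 < τ.im) :
    HasDerivAt E6 (2 * π * I * ((E2 τ * E6 τ - E4 τ ^ 2) / 2)) τ := by
  lift τ to ℍ using hτ
  convert! hasDerivAt_of_coe_eq E₆.holo' E6_coe τ using 2
  have h := congrFun serreDerivative_six_E₆ τ
  simp only [Derivative.serreDerivative_apply, Pi.smul_apply, Pi.mul_apply, smul_eq_mul] at h
  rw [E2_coe, E4_coe, E6_coe]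
  linear_combination -h

theorem hasDerivAt_pfun (hτ : 0 < τ.im) (hE2 : E2 τ ≠ 0) :
    HasDerivAt pfun (E4 τ / E2 τ ^ 2) τ := by
  have hpi : (π : ℂ) ≠ 0 := ofReal_ne_zero.mpr pi_ne_zero
  convert! (hasDerivAt_id τ).sub ((((hasDerivAt_E2 hτ).const_mul (π : ℂ)).inv
    (mul_ne_zero hpi hE2)).const_mul (6 * I)) using 1
  field_simp
  linear_combination -12 * (E2 τ ^ 2 - E4 τ) * I_sq

theorem eventually_hasDerivAt_pfun (hτ : 0 < τ.im) (hE2 : E2 τ ≠ 0) :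
    ∀ᶠ w in 𝓝 τ, HasDerivAt pfun (E4 w / E2 w ^ 2) w := by
  filter_upwards [isOpen_upperHalfPlaneSet.mem_nhds hτ,
    (hasDerivAt_E2 hτ).continuousAt.eventually_ne hE2] with w hw hE2w
  exact hasDerivAt_pfun hw hE2w

theorem analyticAt_pfun (hτ : 0 < τ.im) (hE2 : E2 τ ≠ 0) : AnalyticAt ℂ pfun τ :=
  analyticAt_iff_eventually_differentiableAt.mpr <|
    (eventually_hasDerivAt_pfun hτ hE2).mono fun _ h ↦ h.differentiableAt

theorem logDeriv_deriv_pfun (hτ : 0 < τ.im) (hE2 : E2 τ ≠ 0) (hE4 : E4 τ ≠ 0) :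
    logDeriv (deriv pfun) τ = π * I / 3 * (E2 τ - 2 * (E6 τ / E4 τ) + E4 τ / E2 τ) := by
  have h2 := hasDerivAt_E2 hτ
  have h4 := hasDerivAt_E4 hτ
  have hderiv : deriv pfun =ᶠ[𝓝 τ] fun w ↦ E4 w / E2 w ^ 2 :=
    (eventually_hasDerivAt_pfun hτ hE2).mono fun _ h ↦ h.deriv
  rw [(logDeriv_congr_nhds hderiv).eq_of_nhds,
    logDeriv_div (g := (E2 · ^ 2)) τ hE4 (pow_ne_zero 2 hE2) h4.differentiableAt
      (h2.differentiableAt.fun_pow 2),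
    logDeriv_fun_pow h2.differentiableAt]
  simp only [logDeriv_apply, h2.deriv, h4.deriv]
  field_simp
  push_cast
  ring

theorem hasDerivAt_logDeriv_deriv_pfun (hτ : 0 < τ.im) (hE2 : E2 τ ≠ 0) (hE4 : E4 τ ≠ 0) :
    HasDerivAt (logDeriv (deriv pfun)) (-(2 * π ^ 2 / 3) * (E2 τ ^ 2 / 12 + 7 / 6 * E4 τ -
      E2 τ * E6 τ / (3 * E4 τ) - 2 / 3 * (E6 τ / E4 τ) ^ 2 - E6 τ / (3 * E2 τ) +
      (E4 τ / E2 τ) ^ 2 / 12)) τ := by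
  have h2 := hasDerivAt_E2 hτ
  have h4 := hasDerivAt_E4 hτ
  have h6 := hasDerivAt_E6 hτ
  have heq : logDeriv (deriv pfun) =ᶠ[𝓝 τ]
      fun w ↦ π * I / 3 * (E2 w - 2 * (E6 w / E4 w) + E4 w / E2 w) := by
    filter_upwards [isOpen_upperHalfPlaneSet.mem_nhds hτ, h2.continuousAt.eventually_ne hE2,
      h4.continuousAt.eventually_ne hE4] with w hw hE2w hE4w
    exact logDeriv_deriv_pfun hw hE2w hE4w
  refine HasDerivAt.congr_of_eventuallyEq ?_ heq
  convert! ((h2.sub ((h6.div h4 hE4).const_mul 2)).add (h4.div h2 hE2)).const_mul (π * I / 3)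
    using 1
  field_simp
  simp only [I_sq]
  ring

theorem schwarzianDeriv_pfun (hτ : 0 < τ.im) (hE2 : E2 τ ≠ 0) (hE4 : E4 τ ≠ 0) :
    schwarzianDeriv pfun τ = -(2 * π ^ 2 / 3) * (E4 τ - E6 τ ^ 2 / E4 τ ^ 2) := by
  rw [schwarzianDeriv, (hasDerivAt_logDeriv_deriv_pfun hτ hE2 hE4).deriv,
    logDeriv_deriv_pfun hτ hE2 hE4]
  field_simp
  simp only [I_sq]
  ring

end Derivatives

/-- The Schwarzian derivative of `p`: `{p, τ} = -1152 π² Δ / E₄²`. -/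
theorem schwarzian_of_p (τ : ℂ) (hτ : 0 < τ.im) (hE2 : E2 τ ≠ 0) (hE4 : E4 τ ≠ 0) :
    (2 * deriv pfun τ * deriv (deriv (deriv pfun)) τ
        - 3 * deriv (deriv pfun) τ ^ 2) / (2 * deriv pfun τ ^ 2)
      = -1152 * (Real.pi : ℂ) ^ 2 * Δfun τ / E4 τ ^ 2 := by
  have hp := analyticAt_pfun hτ hE2
  have hp' : deriv pfun τ ≠ 0 := by
    rw [(hasDerivAt_pfun hτ hE2).deriv]
    exact div_ne_zero hE4 (pow_ne_zero 2 hE2)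
  rw [← schwarzianDeriv_eq_div hp.deriv.differentiableAt hp.deriv.deriv.differentiableAt hp',
    schwarzianDeriv_pfun hτ hE2 hE4, Δfun]
  field_simp
  ring
end
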